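/- (Subject Expansion.) If Γ;Δ ⊢ N : σ is derivable in the multi-type system for the λI-calculus and M →β N, then Γ;Δ ⊢ M : σ is derivable. -/

import Mathlib

set_option maxHeartbeats 1000000

/-! # λ-terms (named variables over ℕ) -/

inductive Lam : Type
  | var : ℕ → Lam
  | app : Lam → Lam → Lam
  | lam : ℕ → Lam → Lam
deriving DecidableEq

namespace Lam

/-- Free variables of a λ-term. -/
def fv : Lam → Finset ℕ
  | var x => {x}
  | app M N => M.fv ∪ N.fv
  | lam x M => M.fv.erase x

/-- λI-terms: every abstraction `λx.M` satisfies `x ∈ fv M`. -/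
def IsI : Lam → Prop
  | var _ => True
  | app M N => M.IsI ∧ N.IsI
  | lam x M => x ∈ M.fv ∧ M.IsI

/-- A variable not belonging to a given finite set. -/
def freshVar (s : Finset ℕ) : ℕ := (s.sup id) + 1

/-- Capture-avoiding simultaneous substitution (bound variables are freshened). -/
def substF : Lam → (ℕ → Lam) → Lam
  | var x, σ => σ x
  | app M N, σ => app (M.substF σ) (N.substF σ)
  | lam x M, σ =>
      let y := freshVar ((M.fv.erase x).biUnion fun z => (σ z).fv)
      lam y (M.substF (Function.update σ x (var y)))

/-- Capture-avoiding substitution `M[N/x]`. -/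
def subst (M : Lam) (x : ℕ) (N : Lam) : Lam :=
  M.substF fun z => if z = x then N else var z

/-- Being an abstraction. -/
def isAbs : Lam → Prop
  | lam _ _ => True
  | _ => False

end Lam

/-- One-step β-reduction. -/
inductive Beta : Lam → Lam → Prop
  | beta (x : ℕ) (M N : Lam) : Beta (.app (.lam x M) N) (M.subst x N)
  | appL {M M' : Lam} (N : Lam) : Beta M M' → Beta (.app M N) (.app M' N)
  | appR {N N' : Lam} (M : Lam) : Beta N N' → Beta (.app M N) (.app M N')
  | lam (x : ℕ) {M M' : Lam} : Beta M M' → Beta (.lam x M) (.lam x M')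

/-- One-step head reduction. -/
inductive Head : Lam → Lam → Prop
  | beta (x : ℕ) (M N : Lam) : Head (.app (.lam x M) N) (M.subst x N)
  | app {M M' : Lam} (N : Lam) : ¬ M.isAbs → Head M M' → Head (.app M N) (.app M' N)
  | lam (x : ℕ) {M M' : Lam} : Head M M' → Head (.lam x M) (.lam x M')

/-- Iterated head reduction. -/
def HeadStar : Lam → Lam → Prop := Relation.ReflTransGen Head

/-- Terms of the shape `y M₁ ⋯ Mₖ`. -/
inductive Neutral : Lam → Prop
  | var (x : ℕ) : Neutral (.var x)
  | app {M : Lam} (N : Lam) : Neutral M → Neutral (.app M N)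

/-- Head normal forms `λx₁…xₙ.y M₁ ⋯ Mₖ`. -/
inductive Hnf : Lam → Prop
  | neutral {M : Lam} : Neutral M → Hnf M
  | lam (x : ℕ) {M : Lam} : Hnf M → Hnf (.lam x M)

/-- `M` has a head normal form. -/
def HasHnf (M : Lam) : Prop := ∃ H, HeadStar M H ∧ Hnf H

/-! # Multi-types -/

/-- Simple types: atoms `a ∈ ℕ`, arrows `[]_X → β` and `[α₀,…,αₙ] → β`. -/
inductive STy : Type
  | atom : ℕ → STy
  | arr0 : Finset ℕ → STy → STy
  | arrP : STy → List STy → STy → STy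

/-- Multiset types: the annotated empty multiset `[]_X` or a
non-empty multiset `[α₀,…,αₙ]` (head plus tail). -/
inductive MTy : Type
  | empty : Finset ℕ → MTy
  | mk : STy → List STy → MTy

/-- The arrow type `ᾱ → β`. -/
def MTy.arr : MTy → STy → STy
  | .empty X, β => .arr0 X β
  | .mk α l, β => .arrP α l β

/-- The underlying multiset of simple types of a multiset type. -/
def MTy.toM : MTy → Multiset STy
  | .empty _ => 0
  | .mk α l => α ::ₘ (l : Multiset STy)

/-- Multi-types: `σ ::= e_X | α`. -/
inductive OTy : Type
  | esum : Finset ℕ → OTy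
  | simple : STy → OTy

mutual
/-- Atoms occurring in a simple type. -/
def STy.atoms : STy → Finset ℕ
  | .atom a => {a}
  | .arr0 _ β => β.atoms
  | .arrP α l β => α.atoms ∪ STy.atomsL l ∪ β.atoms
def STy.atomsL : List STy → Finset ℕ
  | [] => ∅
  | α :: l => α.atoms ∪ STy.atomsL l
end

/-! # Environments -/

/-- Type environments: finitely supported maps from variables
to finite multisets of simple types; added pointwise. -/
abbrev TEnv := ℕ →₀ Multiset STy

/-- Variable environments: finite partial maps from variables to finite
sets of variables. -/
abbrev VEnv := Finmap (fun _ : ℕ => Finset ℕ)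

namespace VEnv

/-- `⋃Δ`: the union of the values of `Δ`. -/
def uni (Δ : VEnv) : Finset ℕ :=
  Δ.keys.biUnion fun x => (Δ.lookup x).getD ∅

/-- Coherence `Δ₀ ≍ Δ₁`: agreement on the common domain. -/
def Coh (Δ₀ Δ₁ : VEnv) : Prop :=
  ∀ x : ℕ, x ∈ Δ₀ → x ∈ Δ₁ → Δ₀.lookup x = Δ₁.lookup x

end VEnv

/-! # The multi-type system for the λI-calculus -/

mutual
/-- Typing judgement `Γ; Δ ⊢ M : σ`. -/
inductive Der : TEnv → VEnv → Lam → OTy → Prop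
  | esum {Δ : VEnv} {M : Lam} :
      Δ.keys = M.fv → Der 0 Δ M (.esum Δ.uni)
  | ax (x : ℕ) (α : STy) (X : Finset ℕ) :
      Der (Finsupp.single x {α}) (Finmap.singleton x X) (.var x) (.simple α)
  | app {Γ₀ Γ₁ : TEnv} {Δ₀ Δ₁ : VEnv} {M N : Lam} {m : MTy} {β : STy} :
      Der Γ₀ Δ₀ M (.simple (m.arr β)) → DerB Γ₁ Δ₁ N m → VEnv.Coh Δ₀ Δ₁ →
      Der (Γ₀ + Γ₁) (Δ₀ ∪ Δ₁) (.app M N) (.simple β)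
  | lam0 {Γ : TEnv} {Δ : VEnv} {x : ℕ} {X : Finset ℕ} {M : Lam} {β : STy} :
      Γ x = 0 → x ∉ Δ → Der Γ (Δ.insert x X) M (.simple β) →
      Der Γ Δ (.lam x M) (.simple (.arr0 X β))
  | lamP {Γ : TEnv} {Δ : VEnv} {x : ℕ} {X : Finset ℕ} {M : Lam} {α : STy}
      {l : List STy} {β : STy} :
      Γ x = 0 → x ∉ Δ →
      Der (Γ + Finsupp.single x (MTy.mk α l).toM) (Δ.insert x X) M (.simple β) →
      Der Γ Δ (.lam x M) (.simple (.arrP α l β))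

/-- Typing judgement `Γ; Δ ⊢! M : ᾱ`. -/
inductive DerB : TEnv → VEnv → Lam → MTy → Prop
  | bang0 {Δ : VEnv} {M : Lam} :
      Δ.keys = M.fv → DerB 0 Δ M (.empty Δ.uni)
  | one {Γ : TEnv} {Δ : VEnv} {M : Lam} {α : STy} :
      Der Γ Δ M (.simple α) → DerB Γ Δ M (.mk α [])
  | cons {Γ₀ Γ₁ : TEnv} {Δ : VEnv} {M : Lam} {α α' : STy} {l : List STy} :
      Der Γ₀ Δ M (.simple α) → DerB Γ₁ Δ M (.mk α' l) →
      DerB (Γ₀ + Γ₁) Δ M (.mk α (α' :: l))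
end

/-- The multi-type interpretation `⟦M⟧`. -/
def interp (M : Lam) : Set (TEnv × VEnv × OTy) :=
  { p | Der p.1 p.2.1 M p.2.2 }

/-! # Ohana trees (coinductive equality, as a greatest fixpoint) -/

/-- Matching of the spines `y M₁ ⋯ Mₖ` of two head normal forms:
same head variable, same number of arguments, arguments related by `R`. -/
inductive SpineMatch (R : Lam → Lam → Prop) : Lam → Lam → Prop
  | var (y : ℕ) : SpineMatch R (.var y) (.var y)
  | app {P Q M N : Lam} : SpineMatch R P Q → R M N →
      SpineMatch R (.app P M) (.app Q N)

/-- Matching of two head normal forms, comparing abstraction prefixes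
up to renaming of the bound variables. -/
inductive HnfMatch (R : Lam → Lam → Prop) : Lam → Lam → Prop
  | base {P Q : Lam} : SpineMatch R P Q → HnfMatch R P Q
  | lam {x y : ℕ} {P Q : Lam} :
      (∀ z : ℕ, z ∉ (P.fv.erase x ∪ Q.fv.erase y) →
        HnfMatch R (P.subst x (.var z)) (Q.subst y (.var z))) →
      HnfMatch R (.lam x P) (.lam y Q)

/-- `R` is an Ohana-tree bisimulation. -/
def OTBisim (R : Lam → Lam → Prop) : Prop :=
  ∀ M N, R M N →
    (¬ HasHnf M ∧ ¬ HasHnf N ∧ M.fv = N.fv) ∨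
    (∃ P Q, HeadStar M P ∧ HeadStar N Q ∧ Hnf P ∧ Hnf Q ∧ HnfMatch R P Q)

/-- Equality of Ohana trees: `OT(M) = OT(N)`. -/
def OTEq (M N : Lam) : Prop := ∃ R, OTBisim R ∧ R M N

/-! # λI-resource terms -/

mutual
inductive RTm : Type
  | var : ℕ → RTm
  | lam : ℕ → RTm → RTm
  | app : RTm → RBag → RTm
inductive RBag : Type
  | empty : Finset ℕ → RBag
  | mk : RTm → List RTm → RBag
end

noncomputable instance : DecidableEq RTm := fun _ _ => Classical.dec _
noncomputable instance : DecidableEq RBag := fun _ _ => Classical.dec _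

mutual
/-- Free variables of a resource term. -/
def RTm.fv : RTm → Finset ℕ
  | .var x => {x}
  | .lam x s => s.fv.erase x
  | .app s b => s.fv ∪ b.fv
/-- Free variables of a bag. -/
def RBag.fv : RBag → Finset ℕ
  | .empty X => X
  | .mk h t => h.fv ∪ RTm.fvL t
/-- Free variables of a list of resource terms. -/
def RTm.fvL : List RTm → Finset ℕ
  | [] => ∅
  | h :: t => h.fv ∪ RTm.fvL t
end

mutual
/-- λI-resource terms: in every abstraction `λx.s`, `x` occurs free in `s`. -/
inductive RTm.IsIr : RTm → Prop
  | var (x : ℕ) : RTm.IsIr (.var x)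
  | lam {x : ℕ} {s : RTm} : x ∈ s.fv → RTm.IsIr s → RTm.IsIr (.lam x s)
  | app {s : RTm} {b : RBag} : RTm.IsIr s → RBag.IsIr b → RTm.IsIr (.app s b)
inductive RBag.IsIr : RBag → Prop
  | empty (X : Finset ℕ) : RBag.IsIr (.empty X)
  | mk {h : RTm} {t : List RTm} : RTm.IsIr h → (∀ u ∈ t, RTm.IsIr u) →
      RBag.IsIr (.mk h t)
end

/-- The list of elements of a bag. -/
def RBag.toList : RBag → List RTm
  | .empty _ => []
  | .mk h t => h :: t

/-! Linear (bijective) substitution: `LSub s x ts t` means that `t` is obtained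
by substituting the elements of the list `ts` for the free occurrences of `x`
in `s`, in left-to-right order (annotations of empty bags absorb). -/
mutual
inductive LSub : RTm → ℕ → List RTm → RTm → Prop
  | var_hit (x : ℕ) (t : RTm) : LSub (.var x) x [t] t
  | var_miss {x y : ℕ} : y ≠ x → LSub (.var y) x [] (.var y)
  | lam {x y : ℕ} {s : RTm} {ts : List RTm} {s' : RTm} :
      y ≠ x → y ∉ RTm.fvL ts → LSub s x ts s' →
      LSub (.lam y s) x ts (.lam y s')
  | app {s : RTm} {b : RBag} {x : ℕ} {ts₁ ts₂ : List RTm} {s' : RTm} {b' : RBag} :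
      LSub s x ts₁ s' → LSubB b x ts₂ b' →
      LSub (.app s b) x (ts₁ ++ ts₂) (.app s' b')
inductive LSubB : RBag → ℕ → List RTm → RBag → Prop
  | empty_hit {X : Finset ℕ} {x : ℕ} {ts : List RTm} :
      x ∈ X → LSubB (.empty X) x ts (.empty ((X.erase x) ∪ RTm.fvL ts))
  | empty_miss {X : Finset ℕ} {x : ℕ} :
      x ∉ X → LSubB (.empty X) x [] (.empty X)
  | mk {h : RTm} {t : List RTm} {x : ℕ} {ts₁ ts₂ : List RTm} {h' : RTm}
      {t' : List RTm} :
      LSub h x ts₁ h' → LSubL t x ts₂ t' →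
      LSubB (.mk h t) x (ts₁ ++ ts₂) (.mk h' t')
inductive LSubL : List RTm → ℕ → List RTm → List RTm → Prop
  | nil (x : ℕ) : LSubL [] x [] []
  | cons {h : RTm} {t : List RTm} {x : ℕ} {ts₁ ts₂ : List RTm} {h' : RTm}
      {t' : List RTm} :
      LSub h x ts₁ h' → LSubL t x ts₂ t' →
      LSubL (h :: t) x (ts₁ ++ ts₂) (h' :: t')
end

/-- The root resource reduction step `(λx.s)b →r T`:
`T` is the sum of all results of bijective substitution of the elements
of `b` for the free occurrences of `x` in `s`. -/
def RootRed (x : ℕ) (s : RTm) (b : RBag) (T : Finset RTm) : Prop :=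
  ∀ u : RTm, u ∈ T ↔ ∃ l : List RTm, l.Perm b.toList ∧ LSub s x l u

/-- Pushing an element on top of a bag. -/
def RBag.push (h : RTm) : RBag → RBag
  | .empty _ => .mk h []
  | .mk h' t => .mk h (h' :: t)

mutual
/-- One-step resource reduction of a term to a finite sum. -/
inductive RStep : RTm → Finset RTm → Prop
  | root {x : ℕ} {s : RTm} {b : RBag} {T : Finset RTm} :
      RootRed x s b T → RStep (.app (.lam x s) b) T
  | appL {s : RTm} {T : Finset RTm} {b : RBag} :
      RStep s T → RStep (.app s b) (T.image fun s' => .app s' b)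
  | appB {s : RTm} {b : RBag} {Tb : Finset RBag} :
      RStepB b Tb → RStep (.app s b) (Tb.image fun b' => .app s b')
  | lam {x : ℕ} {s : RTm} {T : Finset RTm} :
      RStep s T → RStep (.lam x s) (T.image fun s' => .lam x s')
/-- One-step resource reduction inside a bag. -/
inductive RStepB : RBag → Finset RBag → Prop
  | head {h : RTm} {t : List RTm} {T : Finset RTm} :
      RStep h T → RStepB (.mk h t) (T.image fun h' => .mk h' t)
  | tail {h h₂ : RTm} {t : List RTm} {B : Finset RBag} :
      RStepB (.mk h₂ t) B → RStepB (.mk h (h₂ :: t)) (B.image (RBag.push h))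
end

/-- One-step resource reduction on finite sums (linear extension). -/
inductive RRed : Finset RTm → Finset RTm → Prop
  | step {S : Finset RTm} {s : RTm} {T : Finset RTm} :
      s ∈ S → RStep s T → RRed S ((S.erase s) ∪ T)

/-- `→r*`. -/
def RRedStar : Finset RTm → Finset RTm → Prop := Relation.ReflTransGen RRed

/-! # The resource multi-type system -/

mutual
/-- Resource typing judgement `Γ; Δ ⊢ s : α`. -/
inductive DerR : TEnv → VEnv → RTm → STy → Prop
  | ax (x : ℕ) (α : STy) (X : Finset ℕ) :
      DerR (Finsupp.single x {α}) (Finmap.singleton x X) (.var x) α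
  | app {Γ₀ Γ₁ : TEnv} {Δ₀ Δ₁ : VEnv} {s : RTm} {b : RBag} {m : MTy} {β : STy} :
      DerR Γ₀ Δ₀ s (m.arr β) → DerRB Γ₁ Δ₁ b m → VEnv.Coh Δ₀ Δ₁ →
      DerR (Γ₀ + Γ₁) (Δ₀ ∪ Δ₁) (.app s b) β
  | lam0 {Γ : TEnv} {Δ : VEnv} {x : ℕ} {X : Finset ℕ} {s : RTm} {β : STy} :
      Γ x = 0 → x ∉ Δ → DerR Γ (Δ.insert x X) s β →
      DerR Γ Δ (.lam x s) (.arr0 X β)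
  | lamP {Γ : TEnv} {Δ : VEnv} {x : ℕ} {X : Finset ℕ} {s : RTm} {α : STy}
      {l : List STy} {β : STy} :
      Γ x = 0 → x ∉ Δ →
      DerR (Γ + Finsupp.single x (MTy.mk α l).toM) (Δ.insert x X) s β →
      DerR Γ Δ (.lam x s) (.arrP α l β)
/-- Resource typing judgement `Γ; Δ ⊢! t̄ : ᾱ`. -/
inductive DerRB : TEnv → VEnv → RBag → MTy → Prop
  | bang0 {Δ : VEnv} : DerRB 0 Δ (.empty Δ.keys) (.empty Δ.uni)
  | one {Γ : TEnv} {Δ : VEnv} {t : RTm} {α : STy} :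
      DerR Γ Δ t α → DerRB Γ Δ (.mk t []) (.mk α [])
  | cons {Γ₀ Γ₁ : TEnv} {Δ : VEnv} {t t' : RTm} {l : List RTm} {α α' : STy}
      {la : List STy} :
      DerR Γ₀ Δ t α → DerRB Γ₁ Δ (.mk t' l) (.mk α' la) →
      DerRB (Γ₀ + Γ₁) Δ (.mk t (t' :: l)) (.mk α (α' :: la))
end

/-! # Taylor expansion -/

/-- `Taylor M s`: the resource term `s` belongs to the Taylor expansion `T(M)`. -/
inductive Taylor : Lam → RTm → Prop
  | var (x : ℕ) : Taylor (.var x) (.var x)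
  | lam {M : Lam} {s : RTm} (x : ℕ) : Taylor M s → Taylor (.lam x M) (.lam x s)
  | app0 {M N : Lam} {s : RTm} : Taylor M s →
      Taylor (.app M N) (.app s (.empty N.fv))
  | appP {M N : Lam} {s t : RTm} {l : List RTm} :
      Taylor M s → Taylor N t → (∀ u ∈ l, Taylor N u) →
      Taylor (.app M N) (.app s (.mk t l))

/-! # Miscellaneous constructions for the last statement -/

/-- The variable environment `Δ_id` mapping each `x ∈ s` to `{x}`. -/
def idEnv (s : Finset ℕ) : VEnv :=
  (s.sort (· ≤ ·)).foldr (fun x Δ => Δ.insert x ({x} : Finset ℕ)) ∅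

/-- The term `y M₁ ⋯ Mₖ`. -/
def Lam.spineApp (y : ℕ) (l : List Lam) : Lam := l.foldl .app (.var y)

/-- The type `[]_{fv N₁} → ⋯ → []_{fv Nₖ} → a`. -/
def yTyRest (a : ℕ) : List Lam → STy
  | [] => .atom a
  | N :: l => .arr0 N.fv (yTyRest a l)

/-- The type `[]_{fv M₁} → ⋯ → [α] → ⋯ → []_{fv Mₖ} → a`, with `[α]`
in the `i`-th argument position (0-based). -/
def yTy (α : STy) (a : ℕ) : List Lam → ℕ → STy
  | [], _ => .atom a
  | _ :: l, 0 => .arrP α [] (yTyRest a l)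
  | N :: l, (i+1) => .arr0 N.fv (yTy α a l i)

namespace SubjExp

/-- Sums of derivations of one term: additive closure of `P`. -/
inductive Sm (P : TEnv → STy → Prop) : TEnv → Multiset STy → Prop
  | nil : Sm P 0 0
  | cons {Γ₀ Γ₁ : TEnv} {α : STy} {m : Multiset STy} :
      P Γ₀ α → Sm P Γ₁ m → Sm P (Γ₀ + Γ₁) (α ::ₘ m)

theorem Sm.mono {P Q : TEnv → STy → Prop} (h : ∀ Γ α, P Γ α → Q Γ α) {Γ : TEnv}
    {m : Multiset STy} (hs : Sm P Γ m) : Sm Q Γ m := by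
  induction hs with
  | nil => exact .nil
  | cons h0 _ ih => exact .cons (h _ _ h0) ih

theorem Sm.inv {P : TEnv → STy → Prop} {Γ : TEnv} {m : Multiset STy} (hs : Sm P Γ m) :
    ∀ α m', m = α ::ₘ m' → ∃ Γ₀ Γ₁, Γ = Γ₀ + Γ₁ ∧ P Γ₀ α ∧ Sm P Γ₁ m' := by
  induction hs with
  | nil => intro α m' h; simp at h
  | @cons Γ₀ Γ₁ a m h0 h1 ih =>
    intro α m' h
    rcases Multiset.cons_eq_cons.1 h with ⟨rfl, rfl⟩ | ⟨_, c, rfl, rfl⟩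
    · exact ⟨_, _, rfl, h0, h1⟩
    · obtain ⟨A, B, rfl, hA, hB⟩ := ih _ _ rfl
      exact ⟨A, Γ₀ + B, by abel, hA, .cons h0 hB⟩

theorem Sm.zero {P : TEnv → STy → Prop} {Γ : TEnv} (hs : Sm P Γ 0) : Γ = 0 := by
  generalize hm : (0 : Multiset STy) = m at hs
  cases hs with
  | nil => rfl
  | cons => simp at hm

theorem Sm.zero_at {P : TEnv → STy → Prop} {z : ℕ} (h : ∀ Γ α, P Γ α → Γ z = 0)
    {Γ : TEnv} {m : Multiset STy} (hs : Sm P Γ m) : Γ z = 0 := by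
  induction hs with
  | nil => rfl
  | cons h0 _ ih => simp [h _ _ h0, ih]

/-- Typing with a total variable environment, by recursion on the term. -/
def D : Lam → (ℕ → Finset ℕ) → TEnv → STy → Prop
  | .var x, _, Γ, β => Γ = Finsupp.single x {β}
  | .app M N, f, Γ, β => D M f Γ (.arr0 (N.fv.biUnion f) β) ∨
      ∃ α l Γ₀ Γ₁, Γ = Γ₀ + Γ₁ ∧ D M f Γ₀ (.arrP α l β) ∧
        Sm (D N f) Γ₁ (α ::ₘ (l : Multiset STy))
  | .lam x M, f, Γ, γ => x ∈ M.fv ∧ Γ x = 0 ∧ ∃ X β,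
      (γ = .arr0 X β ∧ D M (Function.update f x X) Γ β) ∨
      ∃ α l, γ = .arrP α l β ∧ D M (Function.update f x X)
        (Γ + Finsupp.single x (α ::ₘ (l : Multiset STy))) β

theorem D.congr {M : Lam} : ∀ {f g : ℕ → Finset ℕ} {Γ : TEnv} {β : STy},
    (∀ z ∈ M.fv, f z = g z) → D M f Γ β → D M g Γ β := by
  induction M with
  | var x => intro f g Γ β _ h; exact h
  | app M N ihM ihN =>
    intro f g Γ β hfg h
    have hN : ∀ z ∈ N.fv, f z = g z := fun z hz => hfg z (by simp [Lam.fv, hz])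
    have hM : ∀ z ∈ M.fv, f z = g z := fun z hz => hfg z (by simp [Lam.fv, hz])
    rcases h with h | ⟨α, l, Γ₀, Γ₁, rfl, h0, h1⟩
    · left
      rw [← Finset.biUnion_congr rfl hN]
      exact ihM hM h
    · right
      exact ⟨α, l, _, _, rfl, ihM hM h0, h1.mono fun _ _ => ihN hN⟩
  | lam x M ih =>
    intro f g Γ γ hfg h
    have hu : ∀ X : Finset ℕ, ∀ z ∈ M.fv, Function.update f x X z = Function.update g x X z := by
      intro X z hz
      by_cases hzx : z = x
      · subst hzx; simp
      · simp [hzx]; exact hfg z (by simp [Lam.fv, hz, hzx])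
    obtain ⟨hx, h0, X, β, h | ⟨α, l, rfl, h⟩⟩ := h
    · exact ⟨hx, h0, X, β, .inl ⟨h.1, ih (hu X) h.2⟩⟩
    · exact ⟨hx, h0, X, β, .inr ⟨α, l, rfl, ih (hu X) h⟩⟩

theorem D.supp {M : Lam} : ∀ {f : ℕ → Finset ℕ} {Γ : TEnv} {β : STy} {z : ℕ},
    z ∉ M.fv → D M f Γ β → Γ z = 0 := by
  induction M with
  | var x =>
    intro f Γ β z hz h
    have h : Γ = Finsupp.single x {β} := h
    subst h
    rw [Finsupp.single_eq_of_ne]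
    simpa [Lam.fv] using hz
  | app M N ihM ihN =>
    intro f Γ β z hz h
    simp only [Lam.fv, Finset.mem_union, not_or] at hz
    rcases h with h | ⟨α, l, Γ₀, Γ₁, rfl, h0, h1⟩
    · exact ihM hz.1 h
    · simp [ihM hz.1 h0, h1.zero_at fun _ _ => ihN hz.2]
  | lam x M ih =>
    intro f Γ γ z hz h
    obtain ⟨hx, h0, X, β, h | ⟨α, l, rfl, h⟩⟩ := h
    all_goals
      by_cases hzx : z = x
      · subst hzx; exact h0
      have hz' : z ∉ M.fv := by simpa [Lam.fv, hzx] using hz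
    · exact ih hz' h.2
    · have := ih hz' h
      simpa [hzx] using this

/-! ### Relation with the original system -/

def val (Δ : VEnv) (x : ℕ) : Finset ℕ := (Δ.lookup x).getD ∅

theorem der_keys_D :
    (∀ {Γ : TEnv} {Δ : VEnv} {M : Lam} {σ : OTy}, Der Γ Δ M σ →
      Δ.keys = M.fv ∧ ∀ β, σ = .simple β → D M (val Δ) Γ β) := by
  intro Γ Δ M σ h
  refine Der.rec
    (motive_1 := fun Γ Δ M σ _ => Δ.keys = M.fv ∧ ∀ β, σ = .simple β → D M (val Δ) Γ β)
    (motive_2 := fun Γ Δ M m _ => Δ.keys = M.fv ∧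
      (∀ X, m = .empty X → Γ = 0 ∧ X = M.fv.biUnion (val Δ)) ∧
      ∀ α l, m = .mk α l → Sm (D M (val Δ)) Γ (α ::ₘ (l : Multiset STy)))
    ?_ ?_ ?_ ?_ ?_ ?_ ?_ ?_ h
  · intro Δ M h
    exact ⟨h, by simp⟩
  · intro x α X
    refine ⟨by simp [Lam.fv], ?_⟩
    rintro β ⟨⟩
    rfl
  · rintro Γ₀ Γ₁ Δ₀ Δ₁ M N m β _ _ hc ⟨k0, h0⟩ ⟨k1, he, hp⟩
    refine ⟨by rw [Finmap.keys_union, k0, k1]; rfl, ?_⟩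
    rintro _ ⟨⟩
    have hv0 : ∀ z ∈ M.fv, val Δ₀ z = val (Δ₀ ∪ Δ₁) z := by
      intro z hz
      rw [← k0, Finmap.mem_keys] at hz
      rw [val, val, Finmap.lookup_union_left hz]
    have hv1 : ∀ z ∈ N.fv, val Δ₁ z = val (Δ₀ ∪ Δ₁) z := by
      intro z hz
      rw [← k1, Finmap.mem_keys] at hz
      by_cases hz0 : z ∈ Δ₀
      · rw [val, val, Finmap.lookup_union_left hz0, hc z hz0 hz]
      · rw [val, val, Finmap.lookup_union_right hz0]
    have h0 := (h0 _ rfl).congr hv0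
    cases m with
    | empty X =>
      obtain ⟨rfl, rfl⟩ := he _ rfl
      left
      rw [← Finset.biUnion_congr rfl hv1, add_zero]
      exact h0
    | mk α l =>
      right
      exact ⟨α, l, Γ₀, Γ₁, rfl, h0, (hp _ _ rfl).mono fun _ _ h => h.congr hv1⟩
  · rintro Γ Δ x X M β hx hxΔ _ ⟨k, h⟩
    have hk : M.fv = insert x Δ.keys := by
      rw [← k]; ext z; simp [Finmap.mem_keys]
    have hxk : x ∉ Δ.keys := by simpa [Finmap.mem_keys] using hxΔ
    refine ⟨by simp [Lam.fv, hk, Finset.erase_insert hxk], ?_⟩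
    rintro _ ⟨⟩
    refine ⟨by simp [hk], hx, X, β, .inl ⟨rfl, (h _ rfl).congr ?_⟩⟩
    intro z _
    by_cases hz : z = x
    · subst hz; simp [val]
    · simp [val, hz, Finmap.lookup_insert_of_ne]
  · rintro Γ Δ x X M α l β hx hxΔ _ ⟨k, h⟩
    have hk : M.fv = insert x Δ.keys := by
      rw [← k]; ext z; simp [Finmap.mem_keys]
    have hxk : x ∉ Δ.keys := by simpa [Finmap.mem_keys] using hxΔ
    refine ⟨by simp [Lam.fv, hk, Finset.erase_insert hxk], ?_⟩
    rintro _ ⟨⟩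
    refine ⟨by simp [hk], hx, X, β, .inr ⟨α, l, rfl, (h _ rfl).congr ?_⟩⟩
    intro z _
    by_cases hz : z = x
    · subst hz; simp [val]
    · simp [val, hz, Finmap.lookup_insert_of_ne]
  · intro Δ M h
    refine ⟨h, ?_, by simp⟩
    rintro _ ⟨⟩
    exact ⟨rfl, by rw [← h]; rfl⟩
  · rintro Γ Δ M α _ ⟨k, h⟩
    refine ⟨k, by simp, ?_⟩
    rintro _ _ ⟨⟩
    have := Sm.cons (h _ rfl) (Sm.nil (P := D M (val Δ)))
    simpa using this
  · rintro Γ₀ Γ₁ Δ M α α' l _ _ ⟨k, h⟩ ⟨_, _, h'⟩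
    refine ⟨k, by simp, ?_⟩
    rintro _ _ ⟨⟩
    exact Sm.cons (h _ rfl) (h' _ _ rfl)

def IsEnv (Δ : VEnv) (s : Finset ℕ) (f : ℕ → Finset ℕ) : Prop :=
  ∀ x, Δ.lookup x = if x ∈ s then some (f x) else none

theorem exists_env (s : Finset ℕ) (f : ℕ → Finset ℕ) : ∃ Δ, IsEnv Δ s f := by
  induction s using Finset.induction_on with
  | empty => exact ⟨∅, fun x => by simp⟩
  | insert a s _ ih =>
    obtain ⟨Δ, h⟩ := ih
    refine ⟨Δ.insert a (f a), fun x => ?_⟩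
    by_cases hx : x = a
    · subst hx; simp
    · rw [Finmap.lookup_insert_of_ne _ hx, h x]; simp [hx]

theorem IsEnv.mem {Δ : VEnv} {s : Finset ℕ} {f : ℕ → Finset ℕ} (h : IsEnv Δ s f) (x : ℕ) :
    x ∈ Δ ↔ x ∈ s := by
  rw [← Finmap.lookup_isSome, h x]
  split_ifs with hx <;> simp [hx]

theorem IsEnv.keys {Δ : VEnv} {s : Finset ℕ} {f : ℕ → Finset ℕ} (h : IsEnv Δ s f) :
    Δ.keys = s := by
  ext x; rw [Finmap.mem_keys, h.mem]

theorem IsEnv.uni {Δ : VEnv} {s : Finset ℕ} {f : ℕ → Finset ℕ} (h : IsEnv Δ s f) :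
    VEnv.uni Δ = s.biUnion f := by
  unfold VEnv.uni
  rw [h.keys]
  refine Finset.biUnion_congr rfl fun x hx => ?_
  rw [h x]; simp [hx]

theorem isEnv_val (Δ : VEnv) : IsEnv Δ Δ.keys (val Δ) := by
  intro x
  split_ifs with hx
  · rw [Finmap.mem_keys, ← Finmap.lookup_isSome] at hx
    obtain ⟨a, ha⟩ := Option.isSome_iff_exists.1 hx
    simp [val, ha]
  · rw [Finmap.mem_keys] at hx
    exact Finmap.lookup_eq_none.2 hx

theorem derB_of_Sm {N : Lam} {f : ℕ → Finset ℕ} {Δ : VEnv}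
    (ih : ∀ Γ β, D N f Γ β → Der Γ Δ N (.simple β)) (l : List STy) :
    ∀ (α : STy) (Γ : TEnv), Sm (D N f) Γ (α ::ₘ (l : Multiset STy)) →
      DerB Γ Δ N (.mk α l) := by
  induction l with
  | nil =>
    intro α Γ h
    obtain ⟨A, B, rfl, hA, hB⟩ := h.inv _ _ rfl
    obtain rfl := Sm.zero hB
    rw [add_zero]
    exact .one (ih _ _ hA)
  | cons α' l ihl =>
    intro α Γ h
    obtain ⟨A, B, rfl, hA, hB⟩ := h.inv _ _ rfl
    exact .cons (ih _ _ hA) (ihl _ _ hB)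

theorem der_of_D {M : Lam} : ∀ {f : ℕ → Finset ℕ} {Γ : TEnv} {β : STy} {Δ : VEnv},
    IsEnv Δ M.fv f → D M f Γ β → Der Γ Δ M (.simple β) := by
  induction M with
  | var x =>
    intro f Γ β Δ hΔ h
    have h : Γ = Finsupp.single x {β} := h
    subst h
    have : Δ = Finmap.singleton x (f x) := by
      refine Finmap.ext_lookup fun z => ?_
      rw [hΔ z]
      by_cases hz : z = x
      · subst hz; simp [Lam.fv]
      · simp only [Lam.fv, Finset.mem_singleton, hz, if_false]
        symm
        rw [Finmap.lookup_eq_none]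
        simpa using hz
    rw [this]
    exact .ax _ _ _
  | app M N ihM ihN =>
    intro f Γ β Δ hΔ h
    obtain ⟨Δ₀, h0⟩ := exists_env M.fv f
    obtain ⟨Δ₁, h1⟩ := exists_env N.fv f
    have hc : VEnv.Coh Δ₀ Δ₁ := by
      intro x hx hx'
      rw [h0.mem] at hx
      rw [h1.mem] at hx'
      rw [h0 x, h1 x]; simp [hx, hx']
    have : Δ = Δ₀ ∪ Δ₁ := by
      refine Finmap.ext_lookup fun z => ?_
      by_cases hz : z ∈ Δ₀
      · rw [Finmap.lookup_union_left hz, hΔ z, h0 z]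
        rw [h0.mem] at hz
        simp [Lam.fv, hz]
      · rw [Finmap.lookup_union_right hz, hΔ z, h1 z]
        rw [h0.mem] at hz
        simp [Lam.fv, hz]
    rw [this]
    rcases h with h | ⟨α, l, Γ₀, Γ₁, rfl, hM, hN⟩
    · rw [← add_zero Γ]
      refine Der.app (m := .empty (VEnv.uni Δ₁)) ?_ (.bang0 h1.keys) hc
      rw [h1.uni]
      exact ihM h0 h
    · exact Der.app (m := .mk α l) (ihM h0 hM) (derB_of_Sm (fun _ _ h => ihN h1 h) _ _ _ hN) hc
  | lam x M ih =>
    intro f Γ γ Δ hΔ h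
    obtain ⟨hx, h0, X, β, h⟩ := h
    have hxΔ : x ∉ Δ := by rw [hΔ.mem]; simp [Lam.fv]
    have hI : IsEnv (Δ.insert x X) M.fv (Function.update f x X) := by
      intro z
      by_cases hz : z = x
      · subst hz; simp [hx]
      · rw [Finmap.lookup_insert_of_ne _ hz, hΔ z]; simp [Lam.fv, hz]
    rcases h with ⟨rfl, h⟩ | ⟨α, l, rfl, h⟩
    · exact .lam0 h0 hxΔ (ih hI h)
    · exact .lamP h0 hxΔ (ih hI h)

/-! ### Substitution -/

theorem freshVar_notMem (s : Finset ℕ) : Lam.freshVar s ∉ s := by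
  intro h
  have : id (Lam.freshVar s) ≤ s.sup id := Finset.le_sup (f := id) h
  exact absurd this (Nat.not_succ_le_self _)

theorem fv_substF (M : Lam) : ∀ τ : ℕ → Lam,
    (M.substF τ).fv = M.fv.biUnion fun z => (τ z).fv := by
  induction M with
  | var x => intro τ; simp [Lam.substF, Lam.fv]
  | app M N ihM ihN =>
    intro τ
    simp only [Lam.substF, Lam.fv, ihM, ihN, Finset.union_biUnion]
  | lam x M ih =>
    intro τ
    have hy := freshVar_notMem ((M.fv.erase x).biUnion fun z => (τ z).fv)
    simp only [Lam.substF, Lam.fv, ih]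
    generalize Lam.freshVar ((M.fv.erase x).biUnion fun z => (τ z).fv) = y at hy
    ext w
    simp only [Finset.mem_erase, Finset.mem_biUnion] at hy ⊢
    constructor
    · rintro ⟨hw, z, hz, hwz⟩
      by_cases hzx : z = x
      · subst hzx; simp [Lam.fv, hw] at hwz
      · exact ⟨z, ⟨hzx, hz⟩, by simpa [hzx] using hwz⟩
    · rintro ⟨z, ⟨hzx, hz⟩, hwz⟩
      refine ⟨?_, z, hz, by simpa [hzx] using hwz⟩
      rintro rfl
      exact hy ⟨z, ⟨hzx, hz⟩, hwz⟩

/-- `R τ f Γ Γ'`: `Γ` is obtained by typing `τ z` with each type in `Γ' z`. -/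
inductive R (τ : ℕ → Lam) (f : ℕ → Finset ℕ) : TEnv → TEnv → Prop
  | nil : R τ f 0 0
  | cons {z : ℕ} {α : STy} {Γ₀ Γ₁ Γ' : TEnv} : D (τ z) f Γ₀ α → R τ f Γ₁ Γ' →
      R τ f (Γ₀ + Γ₁) (Finsupp.single z {α} + Γ')

theorem R.add {τ : ℕ → Lam} {f : ℕ → Finset ℕ} {A B A' B' : TEnv} (h : R τ f A A')
    (h' : R τ f B B') : R τ f (A + B) (A' + B') := by
  induction h with
  | nil => simpa using h'
  | cons h0 _ ih =>
    rw [add_assoc, add_assoc]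
    exact .cons h0 ih

theorem R.lam {τ : ℕ → Lam} {f : ℕ → Finset ℕ} {x y : ℕ} {Y : Finset ℕ} {Γ Γ' : TEnv}
    (h : R (Function.update τ x (.var y)) (Function.update f y Y) Γ Γ') :
    (∀ z, Γ' z ≠ 0 → z ≠ x → y ∉ (τ z).fv) →
    ∃ (m : Multiset STy) (Γ₁ Γ₁' : TEnv), Γ = Γ₁ + Finsupp.single y m ∧
      Γ' = Γ₁' + Finsupp.single x m ∧ Γ₁' x = 0 ∧ Γ₁ y = 0 ∧ R τ f Γ₁ Γ₁' := by
  induction h with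
  | nil => intro _; exact ⟨0, 0, 0, by simp, by simp, rfl, rfl, .nil⟩
  | @cons z α Γ₀ Γ₁ Γ' h0 _ ih =>
    intro hy
    obtain ⟨m, A, A', rfl, rfl, hA', hA, hR⟩ := ih (by
      intro z' hz'
      refine hy z' ?_
      rw [Finsupp.add_apply]
      intro h
      exact hz' (add_eq_zero.1 h).2)
    by_cases hz : z = x
    · subst hz
      rw [Function.update_self] at h0
      have h0 : Γ₀ = Finsupp.single y {α} := h0
      subst h0
      refine ⟨{α} + m, A, A', ?_, ?_, hA', hA, hR⟩
      · rw [Finsupp.single_add]; abel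
      · rw [Finsupp.single_add]; abel
    · rw [Function.update_of_ne hz] at h0
      have hyz := hy z (by simp) hz
      refine ⟨m, Γ₀ + A, Finsupp.single z {α} + A', by abel, by abel, ?_, ?_, .cons ?_ hR⟩
      · simp [hA', Ne.symm hz]
      · simp [hA, D.supp hyz h0]
      · refine h0.congr fun w hw => ?_
        rw [Function.update_of_ne]
        rintro rfl
        exact hyz hw

theorem R.top {N : Lam} {f : ℕ → Finset ℕ} {x : ℕ} {Γ Γ' : TEnv}
    (h : R (fun z => if z = x then N else .var z) f Γ Γ') :
    ∃ (m : Multiset STy) (B A : TEnv), Γ = A + B ∧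
      Γ' = A + Finsupp.single x m ∧ A x = 0 ∧ Sm (D N f) B m := by
  induction h with
  | nil => exact ⟨0, 0, 0, by simp, by simp, rfl, .nil⟩
  | @cons z α Γ₀ Γ₁ Γ' h0 _ ih =>
    obtain ⟨m, B, A, rfl, rfl, hA, hS⟩ := ih
    by_cases hz : z = x
    · subst hz
      simp only [if_true] at h0
      refine ⟨α ::ₘ m, Γ₀ + B, A, by abel, ?_, hA, .cons h0 hS⟩
      rw [← Multiset.singleton_add, Finsupp.single_add]; abel
    · simp only [hz, if_false] at h0
      have h0 : Γ₀ = Finsupp.single z {α} := h0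
      subst h0
      exact ⟨m, B, Finsupp.single z {α} + A, by abel, by abel,
        by simp [hA, Ne.symm hz], hS⟩

theorem anti {M : Lam} : ∀ {τ : ℕ → Lam} {f : ℕ → Finset ℕ} {Γ : TEnv} {β : STy},
    D (M.substF τ) f Γ β →
    ∃ Γ', D M (fun z => (τ z).fv.biUnion f) Γ' β ∧ R τ f Γ Γ' := by
  induction M with
  | var x =>
    intro τ f Γ β h
    refine ⟨Finsupp.single x {β}, rfl, ?_⟩
    simpa using R.cons (z := x) h (R.nil (τ := τ) (f := f))
  | app M N ihM ihN =>
    intro τ f Γ β h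
    rcases h with h | ⟨α, l, Γ₀, Γ₁, rfl, h0, h1⟩
    · obtain ⟨Γ', hD, hR⟩ := ihM h
      refine ⟨Γ', .inl ?_, hR⟩
      rw [fv_substF, Finset.biUnion_biUnion] at hD
      exact hD
    · obtain ⟨Γ₀', hD, hR⟩ := ihM h0
      have key : ∀ (Γ₁ : TEnv) (m : Multiset STy), Sm (D (N.substF τ) f) Γ₁ m →
          ∃ Γ', Sm (D N (fun z => (τ z).fv.biUnion f)) Γ' m ∧ R τ f Γ₁ Γ' := by
        intro Γ₁ m h
        induction h with
        | nil => exact ⟨0, .nil, .nil⟩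
        | cons h0 _ ih =>
          obtain ⟨A, hA, rA⟩ := ihN h0
          obtain ⟨B, hB, rB⟩ := ih
          exact ⟨A + B, .cons hA hB, rA.add rB⟩
      obtain ⟨Γ₁', hS, hR'⟩ := key _ _ h1
      exact ⟨_, .inr ⟨α, l, _, _, rfl, hD, hS⟩, hR.add hR'⟩
  | lam x M ih =>
    intro τ f Γ γ h
    have hy := freshVar_notMem ((M.fv.erase x).biUnion fun z => (τ z).fv)
    simp only [Lam.substF] at h
    generalize Lam.freshVar ((M.fv.erase x).biUnion fun z => (τ z).fv) = y at hy h
    have hy' : ∀ z ∈ M.fv, z ≠ x → y ∉ (τ z).fv := by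
      intro z hz hzx hyz
      exact hy (Finset.mem_biUnion.2 ⟨z, Finset.mem_erase.2 ⟨hzx, hz⟩, hyz⟩)
    obtain ⟨hyM, hΓ, Y, β, h⟩ := h
    have hx : x ∈ M.fv := by
      rw [fv_substF, Finset.mem_biUnion] at hyM
      obtain ⟨z, hz, hyz⟩ := hyM
      by_cases hzx : z = x
      · exact hzx ▸ hz
      · rw [Function.update_of_ne hzx] at hyz
        exact absurd hyz (hy' z hz hzx)
    have hf : ∀ z ∈ M.fv, (Function.update τ x (Lam.var y) z).fv.biUnion (Function.update f y Y)
        = Function.update (fun z => (τ z).fv.biUnion f) x Y z := by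
      intro z hz
      by_cases hzx : z = x
      · subst hzx; simp [Lam.fv]
      · rw [Function.update_of_ne hzx, Function.update_of_ne hzx]
        refine Finset.biUnion_congr rfl fun w hw => ?_
        rw [Function.update_of_ne]
        rintro rfl
        exact hy' z hz hzx hw
    have main : ∀ (m : Multiset STy),
        D (M.substF (Function.update τ x (Lam.var y))) (Function.update f y Y)
          (Γ + Finsupp.single y m) β →
        ∃ Γ', Γ' x = 0 ∧ R τ f Γ Γ' ∧ D M (Function.update (fun z => (τ z).fv.biUnion f) x Y)
          (Γ' + Finsupp.single x m) β := by
      intro m hm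
      obtain ⟨Γ', hD, hR⟩ := ih hm
      obtain ⟨m', A, A', e, rfl, hA', hA, hR'⟩ := hR.lam (by
        intro z hz
        refine hy' z ?_
        by_contra hzM
        exact hz (hD.supp hzM))
      have hmm : m = m' := by
        have := DFunLike.congr_fun e y
        simpa [hΓ, hA] using this
      subst hmm
      have : Γ = A := add_right_cancel e
      subst this
      exact ⟨A', hA', hR', hD.congr hf⟩
    rcases h with ⟨rfl, h⟩ | ⟨α, l, rfl, h⟩
    · obtain ⟨Γ', h0, hR, hD⟩ := main 0 (by simpa using h)
      exact ⟨Γ', ⟨hx, h0, Y, β, .inl ⟨rfl, by simpa using hD⟩⟩, hR⟩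
    · obtain ⟨Γ', h0, hR, hD⟩ := main _ h
      exact ⟨Γ', ⟨hx, h0, Y, β, .inr ⟨α, l, rfl, hD⟩⟩, hR⟩

theorem beta_exp {M N : Lam} {x : ℕ} {f : ℕ → Finset ℕ} {Γ : TEnv} {β : STy}
    (hx : x ∈ M.fv) (h : D (M.subst x N) f Γ β) : D (.app (.lam x M) N) f Γ β := by
  obtain ⟨Γ', hD, hR⟩ := anti h
  obtain ⟨m, B, A, rfl, rfl, hA, hS⟩ := hR.top
  have hD := hD.congr (g := Function.update f x (N.fv.biUnion f)) (by
    intro z _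
    by_cases hz : z = x
    · subst hz; simp
    · simp [hz, Lam.fv])
  induction m using Quot.inductionOn with
  | h l =>
    cases l with
    | nil =>
      obtain rfl : B = 0 := Sm.zero hS
      left
      refine ⟨hx, by simpa using hA, _, β, .inl ⟨rfl, ?_⟩⟩
      have hD' : D M (Function.update f x (N.fv.biUnion f))
          (A + Finsupp.single x (0 : Multiset STy)) β := hD
      rw [Finsupp.single_zero] at hD'
      exact hD'
    | cons α l =>
      right
      exact ⟨α, l, A, B, rfl, ⟨hx, hA, _, β, .inr ⟨α, l, rfl, hD⟩⟩, hS⟩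

theorem fv_subst {M N : Lam} {x : ℕ} (hx : x ∈ M.fv) :
    (M.subst x N).fv = M.fv.erase x ∪ N.fv := by
  rw [Lam.subst, fv_substF]
  ext w
  simp only [Finset.mem_biUnion, Finset.mem_union, Finset.mem_erase]
  constructor
  · rintro ⟨z, hz, hw⟩
    by_cases hzx : z = x
    · subst hzx; right; simpa using hw
    · simp only [hzx, if_false, Lam.fv, Finset.mem_singleton] at hw
      subst hw
      exact .inl ⟨hzx, hz⟩
  · rintro (⟨hw, hwM⟩ | hw)
    · exact ⟨w, hwM, by simp [hw, Lam.fv]⟩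
    · exact ⟨x, hx, by simpa using hw⟩

theorem fv_beta {M N : Lam} (h : Beta M N) : M.IsI → N.fv = M.fv := by
  induction h with
  | beta x M N => intro hI; exact fv_subst hI.1.1
  | appL N _ ih => intro hI; simp [Lam.fv, ih hI.1]
  | appR M _ ih => intro hI; simp [Lam.fv, ih hI.2]
  | lam x _ ih => intro hI; simp [Lam.fv, ih hI.2]

theorem D_exp {M N : Lam} (h : Beta M N) : M.IsI → ∀ {f : ℕ → Finset ℕ} {Γ : TEnv} {β : STy},
    D N f Γ β → D M f Γ β := by
  induction h with
  | beta x M N => intro hI f Γ β hD; exact beta_exp hI.1.1 hD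
  | appL N _ ih =>
    intro hI f Γ β hD
    rcases hD with h | ⟨α, l, Γ₀, Γ₁, rfl, h0, h1⟩
    · exact .inl (ih hI.1 h)
    · exact .inr ⟨α, l, _, _, rfl, ih hI.1 h0, h1⟩
  | appR M hb ih =>
    intro hI f Γ β hD
    rcases hD with h | ⟨α, l, Γ₀, Γ₁, rfl, h0, h1⟩
    · left
      rw [← fv_beta hb hI.2]
      exact h
    · exact .inr ⟨α, l, _, _, rfl, h0, h1.mono fun _ _ h => ih hI.2 h⟩
  | lam x hb ih =>
    intro hI f Γ γ hD
    obtain ⟨_, h0, X, β, ⟨rfl, h⟩ | ⟨α, l, rfl, h⟩⟩ := hD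
    · exact ⟨hI.1, h0, X, β, .inl ⟨rfl, ih hI.2 h⟩⟩
    · exact ⟨hI.1, h0, X, β, .inr ⟨α, l, rfl, ih hI.2 h⟩⟩

end SubjExp

/-- Subject Expansion. -/
theorem stmt5 (Γ : TEnv) (Δ : VEnv) (M N : Lam) (σ : OTy) (hM : M.IsI)
    (h : Der Γ Δ N σ) (hr : Beta M N) : Der Γ Δ M σ := by
  obtain ⟨k, hD⟩ := SubjExp.der_keys_D h
  have hk : Δ.keys = M.fv := k.trans (SubjExp.fv_beta hr hM)
  cases σ with
  | esum X =>
    cases h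
    exact .esum hk
  | simple β =>
    refine SubjExp.der_of_D ?_ (SubjExp.D_exp hr hM (hD β rfl))
    rw [← hk]
    exact SubjExp.isEnv_val Δ
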